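/- arXiv:0909.3362 — 2 statements merged into one kernel-verified Lean document; each statement's English description precedes it below -/
import Mathlib

section
/- Let R be a vector space with multilinear operations M_{1q} : R × R^q → R (q ≥ 0, M_{10} = id), extended to maps M(X;Y) on words by the stated conventions, and let ⋆ be the product on T(R) defined by the Loday–Ronco formula. Then the operations M_{1q} satisfy the brace relation if and only if M(M(X;Y);Z) = M(X; Y ⋆ Z) for every letter X ∈ R and all words Y, Z ∈ T(R). -/
/-! Common setup: words in `T(R)`, factorizations, extended brace maps,
and the Loday–Ronco product. -/

section

variable (K : Type*) [Field K]
variable {R : Type*} [AddCommGroup R] [Module K R]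

/-- All splittings of a list into a prefix and a suffix (concatenation factorizations
into two factors). -/
def splits {α : Type*} (l : List α) : List (List α × List α) :=
  (List.range (l.length + 1)).map fun i => (l.take i, l.drop i)

/-- All factorizations of a list into `k` (possibly empty) consecutive concatenation
factors. -/
def splitsN {α : Type*} : ℕ → List α → List (List (List α))
  | 0, l => if l.isEmpty then [[]] else []
  | k + 1, l => (splits l).flatMap fun p => (splitsN k p.2).map fun r => p.1 :: r

variable {K}

/-- The extension `M(X;Y)` of the brace operations `M_{1q}` to pairs of words:
`M(1;1) = 0`, `M(1;y) = y` and `M(x;Y) = M_{1q}(x;Y)` for a single letter `x`,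
and `M(X;Y) = 0` whenever `X` has length `> 1` (in particular `M(X;1) = 0` for
`|X| > 1`), and `M(1;Y) = 0` for `|Y| > 1`. -/
def Mext (M : R → List R → R) : List R → List R → R
  | [], [] => 0
  | [], [y] => y
  | [], _ :: _ :: _ => 0
  | [x], ys => M x ys
  | _ :: _ :: _, _ => 0

/-- The list of words (with multiplicities) whose formal sum is the Loday–Ronco
product `X ⋆ Y = Σ_{k ≥ 1} Σ_{X = X¹⋯X^k, Y = Y¹⋯Y^k} M(X¹;Y¹)⋯M(X^k;Y^k)`;
the terms with `k > |X| + |Y|` vanish in `T(R)` (each contains a letter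
`M(1;1) = 0`), and `1 ⋆ 1 = 1`. -/
def starWords (M : R → List R → R) : List R → List R → List (List R)
  | [], [] => [[]]
  | X, Y =>
    (List.range (X.length + Y.length)).flatMap fun k =>
      (splitsN (k + 1) X).flatMap fun Xs =>
        (splitsN (k + 1) Y).map fun Ys => List.zipWith (Mext M) Xs Ys

variable (K)

/-- A word `x₁⋯xₙ ∈ R^{⊗n} ⊂ T(R)`, realized in the tensor algebra. -/
def wd (l : List R) : TensorAlgebra K R :=
  (l.map fun x => TensorAlgebra.ι K x).prod

/-- The Loday–Ronco product `⋆` on `T(R)`, evaluated on two words. -/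
def starW (M : R → List R → R) (X Y : List R) : TensorAlgebra K R :=
  ((starWords M X Y).map (wd K)).sum

variable {K}

/-- The word `z₁ ⋯ {y₁; z_{k₁},…} ⋯ {yₙ; z_{kₙ},…} ⋯ z_m` appearing on the right-hand
side of the brace relation: the factorization `Zs = P₀B₁P₁⋯BₙPₙ` of the word `zs`
into `2n+1` consecutive (possibly empty) blocks singles out the blocks `Bᵢ` braced
into the `yᵢ`, in order, the remaining letters left in place. -/
def braceRHSword (M : R → List R → R) : List (List R) → List R → List R
  | [P], [] => P
  | P :: B :: rest, y :: ys => P ++ M y B :: braceRHSword M rest ys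
  | _, _ => []

/-- The brace relation
`{{x; y₁,…,yₙ}; z₁,…,z_m} = Σ {x; z₁,…,{y₁; z_{k₁},…},…,{yₙ; z_{kₙ},…},…,z_m}`,
the sum running over all ways to choose `n` disjoint consecutive (possibly empty)
blocks of `z₁⋯z_m`, in this order, braced into `y₁,…,yₙ`. -/
def BraceRel (M : R → List R → R) : Prop :=
  ∀ (x : R) (ys zs : List R),
    M (M x ys) zs =
      ((splitsN (2 * ys.length + 1) zs).map fun Zs => M x (braceRHSword M Zs ys)).sum

end

/-!
A letter `M(X;Y)` with `X` of length greater than one is zero, and so is `M(1;Y)` unless `Y` is a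
single letter. Modulo words with a zero letter, the first letter of a term of `X ⋆ Z` is therefore
either the first letter of `Z`, or `M(x;Z')` with `x` the first letter of `X` and `Z'` a prefix of
`Z`. The first letter of a word in the brace sum obeys the same dichotomy, with the same remainders,
so by induction both sums agree under every functional that kills words with a zero letter.
-/

section ListSums

variable {α β A : Type*} [AddCommMonoid A]

theorem sum_map_flatMap (l : List α) (g : α → List β) (h : β → A) :
    ((l.flatMap g).map h).sum = (l.map fun a => ((g a).map h).sum).sum := by
  rw [List.map_flatMap, List.flatMap_def, List.sum_flatten, List.map_map, Function.comp_def]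

theorem sum_map_sum_map_comm (l : List α) (m : List β) (g : α → β → A) :
    (l.map fun a => (m.map fun b => g a b).sum).sum =
      (m.map fun b => (l.map fun a => g a b).sum).sum := by
  simpa using Multiset.sum_map_sum_map (l : Multiset α) (m : Multiset β) (f := g)

end ListSums

section Factorizations

variable {α A : Type*}

theorem splits_nil : splits ([] : List α) = [([], [])] := rfl

theorem splits_cons (a : α) (l : List α) :
    splits (a :: l) = ([], a :: l) :: (splits l).map fun p => (a :: p.1, p.2) := by
  simp [splits, List.range_succ_eq_map, Function.comp_def]

theorem length_snd_le_of_mem_splits {l : List α} {p : List α × List α} (hp : p ∈ splits l) :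
    p.2.length ≤ l.length := by
  obtain ⟨i, -, rfl⟩ := List.mem_map.mp hp
  simp

theorem splitsN_one (l : List α) : splitsN 1 l = [[l]] := by
  induction l with
  | nil => rfl
  | cons a l ih =>
    have prepend := congrArg (List.map (List.modifyHead (a :: ·))) ih
    simp only [splitsN, List.map_flatMap] at prepend
    simpa [splitsN, splits_cons, List.flatMap_map, Function.comp_def] using prepend

variable [AddCommMonoid A]

theorem sum_map_splitsN_succ (k : ℕ) (l : List α) (g : List (List α) → A) :
    ((splitsN (k + 1) l).map g).sum =
      ((splits l).map fun p => ((splitsN k p.2).map fun r => g (p.1 :: r)).sum).sum := by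
  simp only [splitsN, sum_map_flatMap, List.map_map, Function.comp_def]

theorem sum_map_splits_cons (a : α) (l : List α) (g : List α × List α → A) :
    ((splits (a :: l)).map g).sum =
      g ([], a :: l) + ((splits l).map fun p => g (a :: p.1, p.2)).sum := by
  simp only [splits_cons, List.map_cons, List.sum_cons, List.map_map, Function.comp_def]

theorem sum_map_splits_cons_of_long_prefix_eq_zero (a : α) (l : List α) (g : List α × List α → A)
    (hg : ∀ b c u v, g (b :: c :: u, v) = 0) :
    ((splits (a :: l)).map g).sum = g ([], a :: l) + g ([a], l) := by
  rw [sum_map_splits_cons]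
  cases l with
  | nil => simp [splits_nil]
  | cons b l => simp [sum_map_splits_cons, hg]

end Factorizations

section BraceSum

variable {R A : Type*} [AddCommMonoid A]

/-- The value of a functional `f` on the formal sum of words in the right-hand side of the brace
relation for `{{·; X}; Z}`. -/
def braceSum (M : R → List R → R) (f : List R → A) (X Z : List R) : A :=
  ((splitsN (2 * X.length + 1) Z).map fun Zs => f (braceRHSword M Zs X)).sum

variable (M : R → List R → R) (f : List R → A)

theorem braceSum_nil (Z : List R) : braceSum M f [] Z = f Z := by
  simp [braceSum, splitsN_one, braceRHSword]

theorem braceSum_cons (x : R) (X Z : List R) :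
    braceSum M f (x :: X) Z = ((splits Z).map fun p => ((splits p.2).map fun q =>
      braceSum M (fun w => f (p.1 ++ M x q.1 :: w)) X q.2).sum).sum := by
  simp only [braceSum, List.length_cons, Nat.mul_succ, sum_map_splitsN_succ, braceRHSword]

theorem braceSum_cons_nil (x : R) (X : List R) :
    braceSum M f (x :: X) [] = braceSum M (fun w => f (M x [] :: w)) X [] := by
  simp [braceSum_cons, splits_nil]

theorem braceSum_cons_cons (x z : R) (X Z : List R) :
    braceSum M f (x :: X) (z :: Z) = braceSum M (fun w => f (z :: w)) (x :: X) Z +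
      ((splits (z :: Z)).map fun q => braceSum M (fun w => f (M x q.1 :: w)) X q.2).sum := by
  simp only [braceSum_cons, sum_map_splits_cons z Z fun p => ((splits p.2).map _).sum,
    List.nil_append, List.cons_append]
  exact add_comm _ _

end BraceSum

section StarSum

variable {R A : Type*} [AddCommGroup R] [AddCommMonoid A]

/-- The value of a functional `f` on the formal sum of the words `M(X¹;Z¹)⋯M(Xᵏ;Zᵏ)` with exactly
`k` factors in the Loday–Ronco product `X ⋆ Z`. -/
def factorSum (M : R → List R → R) (f : List R → A) (k : ℕ) (X Z : List R) : A :=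
  ((splitsN k X).map fun Xs =>
    ((splitsN k Z).map fun Zs => f (List.zipWith (Mext M) Xs Zs)).sum).sum

/-- The value of a functional `f` on the terms with fewer than `N` factors in the Loday–Ronco
product `X ⋆ Z`. The term with no factor is included: it is the empty word if `X = Z = 1`, and is
absent otherwise. -/
def truncatedStarSum (M : R → List R → R) (f : List R → A) (N : ℕ) (X Z : List R) : A :=
  ((List.range N).map fun k => factorSum M f k X Z).sum

variable (M : R → List R → R)

theorem starWords_eq_flatMap_range (X Z : List R) :
    starWords M X Z = (List.range (X.length + Z.length + 1)).flatMap fun k =>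
      (splitsN k X).flatMap fun Xs => (splitsN k Z).map fun Zs =>
        List.zipWith (Mext M) Xs Zs := by
  rw [List.range_succ_eq_map, List.flatMap_cons, List.flatMap_map]
  cases X <;> cases Z <;> simp [starWords, splitsN]

theorem sum_map_starWords_eq_truncatedStarSum (f : List R → A) (X Z : List R) :
    ((starWords M X Z).map f).sum = truncatedStarSum M f (X.length + Z.length + 1) X Z := by
  simp only [starWords_eq_flatMap_range, sum_map_flatMap, List.map_map, Function.comp_def,
    truncatedStarSum, factorSum]

theorem factorSum_succ (f : List R → A) (k : ℕ) (X Z : List R) :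
    factorSum M f (k + 1) X Z = ((splits X).map fun p => ((splits Z).map fun q =>
      factorSum M (fun w => f (Mext M p.1 q.1 :: w)) k p.2 q.2).sum).sum := by
  simp only [factorSum, sum_map_splitsN_succ, List.zipWith_cons_cons]
  congr! 3 with p
  exact sum_map_sum_map_comm _ _ _

theorem truncatedStarSum_succ (f : List R → A) (N : ℕ) (X Z : List R) :
    truncatedStarSum M f (N + 1) X Z =
      factorSum M f 0 X Z + ((splits X).map fun p => ((splits Z).map fun q =>
        truncatedStarSum M (fun w => f (Mext M p.1 q.1 :: w)) N p.2 q.2).sum).sum := by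
  simp only [truncatedStarSum, List.range_succ_eq_map, List.map_cons, List.sum_cons, List.map_map,
    Function.comp_def, Nat.succ_eq_add_one, factorSum_succ]
  rw [sum_map_sum_map_comm]
  congr! 4 with p
  exact sum_map_sum_map_comm _ _ _

theorem truncatedStarSum_eq_zero {f : List R → A} (hf : ∀ w, f w = 0) (N : ℕ) (X Z : List R) :
    truncatedStarSum M f N X Z = 0 := by
  simp [truncatedStarSum, factorSum, hf]

theorem sum_map_splits_Mext_nil (g : R → List R → A) (hg : ∀ Z, g 0 Z = 0) (z : R) (Z : List R) :
    ((splits (z :: Z)).map fun q => g (Mext M [] q.1) q.2).sum = g z Z := by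
  rw [sum_map_splits_cons_of_long_prefix_eq_zero _ _ _ fun _ _ _ _ => hg _]
  simp [Mext, hg]

theorem sum_map_splits_Mext_cons (g : R → List R → List R → A) (hg : ∀ X Z, g 0 X Z = 0)
    (x : R) (X Z : List R) :
    ((splits (x :: X)).map fun p => ((splits Z).map fun q =>
        g (Mext M p.1 q.1) p.2 q.2).sum).sum =
      ((splits Z).map fun q => g (Mext M [] q.1) (x :: X) q.2).sum +
        ((splits Z).map fun q => g (M x q.1) X q.2).sum := by
  rw [sum_map_splits_cons_of_long_prefix_eq_zero]
  · simp only [Mext]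
  · simp [Mext, hg]

variable {f : List R → A} (hf : ∀ w, 0 ∈ w → f w = 0)
include hf

theorem truncatedStarSum_zero_cons (N : ℕ) (X Z : List R) :
    truncatedStarSum M (fun w => f (0 :: w)) N X Z = 0 :=
  truncatedStarSum_eq_zero M (fun _ => hf _ List.mem_cons_self) N X Z

theorem truncatedStarSum_succ_nil_nil (N : ℕ) : truncatedStarSum M f (N + 1) [] [] = f [] := by
  simp [truncatedStarSum_succ, splits_nil, factorSum, splitsN, Mext,
    truncatedStarSum_zero_cons M hf]

theorem truncatedStarSum_succ_nil_cons (N : ℕ) (z : R) (Z : List R) :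
    truncatedStarSum M f (N + 1) [] (z :: Z) =
      truncatedStarSum M (fun w => f (z :: w)) N [] Z := by
  have collapse := sum_map_splits_Mext_nil M
    (fun a => truncatedStarSum M (fun w => f (a :: w)) N [])
    (truncatedStarSum_zero_cons M hf N []) z Z
  simp [truncatedStarSum_succ, splits_nil, factorSum, splitsN, collapse]

theorem truncatedStarSum_succ_cons_nil (N : ℕ) (x : R) (X : List R) :
    truncatedStarSum M f (N + 1) (x :: X) [] =
      truncatedStarSum M (fun w => f (M x [] :: w)) N X [] := by
  rw [truncatedStarSum_succ, sum_map_splits_Mext_cons M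
    (fun a => truncatedStarSum M (fun w => f (a :: w)) N) (truncatedStarSum_zero_cons M hf N)]
  simp [splits_nil, factorSum, splitsN, Mext, truncatedStarSum_zero_cons M hf]

theorem truncatedStarSum_succ_cons_cons (N : ℕ) (x z : R) (X Z : List R) :
    truncatedStarSum M f (N + 1) (x :: X) (z :: Z) =
      truncatedStarSum M (fun w => f (z :: w)) N (x :: X) Z +
        ((splits (z :: Z)).map fun q =>
          truncatedStarSum M (fun w => f (M x q.1 :: w)) N X q.2).sum := by
  rw [truncatedStarSum_succ, sum_map_splits_Mext_cons M
      (fun a => truncatedStarSum M (fun w => f (a :: w)) N) (truncatedStarSum_zero_cons M hf N),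
    sum_map_splits_Mext_nil M (fun a => truncatedStarSum M (fun w => f (a :: w)) N (x :: X))
      (truncatedStarSum_zero_cons M hf N (x :: X))]
  simp [factorSum, splitsN]

theorem truncatedStarSum_eq_braceSum {N : ℕ} {X Z : List R} (hN : X.length + Z.length < N) :
    truncatedStarSum M f N X Z = braceSum M f X Z := by
  induction N generalizing f X Z with
  | zero => omega
  | succ N ih =>
    have ih_cons (a : R) {X Z : List R} (h : X.length + Z.length < N) :
        truncatedStarSum M (fun w => f (a :: w)) N X Z = braceSum M (fun w => f (a :: w)) X Z :=
      ih (fun w hw => hf _ (List.mem_cons_of_mem a hw)) h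
    match X, Z with
    | [], [] => rw [truncatedStarSum_succ_nil_nil M hf, braceSum_nil]
    | [], z :: Z =>
      rw [truncatedStarSum_succ_nil_cons M hf, ih_cons z (by grind), braceSum_nil, braceSum_nil]
    | x :: X, [] =>
      rw [truncatedStarSum_succ_cons_nil M hf, ih_cons _ (by grind), braceSum_cons_nil]
    | x :: X, z :: Z =>
      rw [truncatedStarSum_succ_cons_cons M hf, ih_cons z (by grind), braceSum_cons_cons]
      congr 2
      refine List.map_congr_left fun q hq => ih_cons _ ?_
      have := length_snd_le_of_mem_splits hq
      grind

theorem sum_map_starWords_eq_braceSum (X Z : List R) :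
    ((starWords M X Z).map f).sum = braceSum M f X Z := by
  rw [sum_map_starWords_eq_truncatedStarSum, truncatedStarSum_eq_braceSum M hf (Nat.lt_succ_self _)]

end StarSum

theorem braceRel_iff_brace_of_star_general {R : Type*} [AddCommGroup R] (M : R → List R → R)
    (hM : ∀ (x : R) (w : List R), 0 ∈ w → M x w = 0) :
    BraceRel M ↔
      ∀ (x : R) (Y Z : List R),
        M (M x Y) Z = ((starWords M Y Z).map fun w => M x w).sum :=
  forall₃_congr fun x Y Z => by rw [sum_map_starWords_eq_braceSum M (hM x), braceSum]

/-- Let `R` be a vector space with multilinear operations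
`M_{1q} : R × R^q → R` (`q ≥ 0`, `M_{10} = id`), extended to words by the stated
conventions, and let `⋆` be the Loday–Ronco product on `T(R)`. Then the
operations satisfy the brace relation if and only if
`M(M(X;Y);Z) = M(X; Y ⋆ Z)` for every letter `X ∈ R` and all words `Y, Z ∈ T(R)`
(the right-hand side being `M(X;·)` applied, by multilinearity, to the sum of
words `Y ⋆ Z`). -/
theorem braceRel_iff_brace_of_star
    (K : Type*) [Field K] {R : Type*} [AddCommGroup R] [Module K R]
    (M : R → List R → R)
    (hM0 : ∀ x : R, M x [] = x)
    (hadd₁ : ∀ (a b : R) (ys : List R), M (a + b) ys = M a ys + M b ys)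
    (hsmul₁ : ∀ (c : K) (a : R) (ys : List R), M (c • a) ys = c • M a ys)
    (hadd₂ : ∀ (x : R) (p s : List R) (a b : R),
      M x (p ++ (a + b) :: s) = M x (p ++ a :: s) + M x (p ++ b :: s))
    (hsmul₂ : ∀ (x : R) (p s : List R) (c : K) (a : R),
      M x (p ++ (c • a) :: s) = c • M x (p ++ a :: s)) :
    BraceRel M ↔
      ∀ (x : R) (Y Z : List R),
        M (M x Y) Z = ((starWords M Y Z).map fun w => M x w).sum := by
  refine braceRel_iff_brace_of_star_general M fun x w hw => ?_
  obtain ⟨p, s, rfl⟩ := List.append_of_mem hw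
  simpa using hsmul₂ x p s 0 0
end

section
/- Let R be a brace algebra and ⋆ the Loday–Ronco product on T(R). For all n, m ≥ 1 and letters x_i, y_j ∈ R: (x_1⋯x_n) ⋆ (y_1⋯y_m) = [(x_1⋯x_{n−1}) ⋆ (y_1⋯y_m)]·x_n + [(x_1⋯x_n) ⋆ (y_1⋯y_{m−1})]·y_m + Σ_{i=0}^{m−1} [(x_1⋯x_{n−1}) ⋆ (y_1⋯y_i)]·M_{1,m−i}(x_n; y_{i+1}⋯y_m), where juxtaposition denotes concatenation and empty words are treated as 1 (with 1 ⋆ Z = Z ⋆ 1 = Z). -/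
/-!
Encode a function of two words as a formal series in noncommuting variables whose coefficients are
again such series; its product is convolution over all factorizations of both words. If `φ` is the
series `(X, Y) ↦ M(X; Y)`, the terms of `X ⋆ Y` with exactly `k` factors add up to the coefficient
of `φ ^ k`, so `⋆` is the geometric series `∑ φ ^ k`, which is locally finite because
`M(1; 1) = 0`. Hence `⋆ = 1 + ⋆ * φ`. The coefficient of this identity at two words reads off the
last factor `M(X^k; Y^k)`, and the vanishing conditions on `M` leave only the last factors
`M(xₙ; y_{i+1}⋯y_m)` (`i = m` giving `xₙ` itself) and `M(1; y_m)`.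
-/

/-- Formal series in the noncommuting variables `α` with coefficients in `A`, encoded as the family
of their coefficients. Functions of two words are series whose coefficients are series. -/
def WordSeries (α A : Type*) : Type _ :=
  List α → A

namespace WordSeries

variable {α β A : Type*}

@[ext]
theorem ext {f g : WordSeries α A} (h : ∀ l, f l = g l) : f = g :=
  funext h

instance [AddCommMonoid A] : AddCommMonoid (WordSeries α A) :=
  inferInstanceAs (AddCommMonoid (List α → A))

section AddCommMonoid

variable [AddCommMonoid A]

theorem zero_apply (l : List α) : (0 : WordSeries α A) l = 0 :=
  rfl

theorem add_apply (f g : WordSeries α A) (l : List α) : (f + g) l = f l + g l :=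
  rfl

theorem sum_apply {ι : Type*} (s : Finset ι) (f : ι → WordSeries α A) (l : List α) :
    (∑ i ∈ s, f i) l = ∑ i ∈ s, f i l :=
  Finset.sum_apply l s f

end AddCommMonoid

section Semiring

variable [Semiring A]

instance : One (WordSeries α A) where
  one
    | [] => 1
    | _ :: _ => 0

instance : Mul (WordSeries α A) where
  mul f g l := ∑ i ∈ Finset.range (l.length + 1), f (l.take i) * g (l.drop i)

theorem one_apply_nil : (1 : WordSeries α A) [] = 1 :=
  rfl

theorem one_apply_of_ne_nil {l : List α} (hl : l ≠ []) : (1 : WordSeries α A) l = 0 := by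
  cases l with
  | nil => exact absurd rfl hl
  | cons => rfl

theorem mul_apply (f g : WordSeries α A) (l : List α) :
    (f * g) l = ∑ i ∈ Finset.range (l.length + 1), f (l.take i) * g (l.drop i) :=
  rfl

protected theorem one_mul (f : WordSeries α A) : 1 * f = f := by
  ext l
  rw [mul_apply, Finset.sum_range_succ', Finset.sum_eq_zero, zero_add, List.take_zero,
    List.drop_zero, one_apply_nil, _root_.one_mul]
  intro i hi
  have hne : l.take (i + 1) ≠ [] := by
    rw [Ne, List.take_eq_nil_iff]
    rintro (h | rfl)
    · omega
    · simp at hi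
  rw [one_apply_of_ne_nil hne, zero_mul]

protected theorem mul_one (f : WordSeries α A) : f * 1 = f := by
  ext l
  rw [mul_apply, Finset.sum_range_succ, Finset.sum_eq_zero, zero_add, List.take_length,
    List.drop_length, one_apply_nil, _root_.mul_one]
  intro i hi
  have hne : l.drop i ≠ [] := by
    rw [Ne, List.drop_eq_nil_iff]
    simpa using hi
  rw [one_apply_of_ne_nil hne, mul_zero]

protected theorem mul_assoc (f g h : WordSeries α A) : f * g * h = f * (g * h) := by
  ext l
  let F (i j : ℕ) : A := f (l.take i) * (g ((l.drop i).take j) * h (l.drop (i + j)))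
  calc (f * g * h) l
      = ∑ m ∈ Finset.range (l.length + 1), ∑ i ∈ Finset.range (m + 1), F i (m - i) := by
        simp only [mul_apply, Finset.sum_mul]
        refine Finset.sum_congr rfl fun m hm => ?_
        have hm' : (l.take m).length = m :=
          List.length_take_of_le (Nat.lt_succ_iff.mp (Finset.mem_range.mp hm))
        rw [hm']
        refine Finset.sum_congr rfl fun i hi => ?_
        have him : i ≤ m := Nat.lt_succ_iff.mp (Finset.mem_range.mp hi)
        simp only [F, List.take_take, List.drop_take, min_eq_left him, Nat.add_sub_cancel' him,
          _root_.mul_assoc]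
    _ = ∑ i ∈ Finset.range (l.length + 1), ∑ j ∈ Finset.range (l.length + 1 - i), F i j :=
        Finset.sum_range_diag_flip _ F
    _ = (f * (g * h)) l := by
        simp only [mul_apply, Finset.mul_sum]
        refine Finset.sum_congr rfl fun i hi => ?_
        have hil : l.length + 1 - i = (l.drop i).length + 1 := by
          rw [List.length_drop, Nat.sub_add_comm (Nat.lt_succ_iff.mp (Finset.mem_range.mp hi))]
        simp only [hil, F, List.drop_drop]

instance : Semiring (WordSeries α A) where
  one_mul := WordSeries.one_mul
  mul_one := WordSeries.mul_one
  mul_assoc := WordSeries.mul_assoc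
  zero_mul f := by ext l; simp [mul_apply, zero_apply]
  mul_zero f := by ext l; simp [mul_apply, zero_apply]
  left_distrib f g h := by ext l; simp [mul_apply, add_apply, mul_add, Finset.sum_add_distrib]
  right_distrib f g h := by ext l; simp [mul_apply, add_apply, add_mul, Finset.sum_add_distrib]

theorem mul_apply_append_singleton (f : WordSeries α A) {g : WordSeries α A}
    (hg : ∀ l : List α, 2 ≤ l.length → g l = 0) (l : List α) (x : α) :
    (f * g) (l ++ [x]) = f l * g [x] + f (l ++ [x]) * g [] := by
  have hlong : ∑ i ∈ Finset.range l.length, f ((l ++ [x]).take i) * g ((l ++ [x]).drop i) = 0 := by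
    refine Finset.sum_eq_zero fun i hi => ?_
    rw [Finset.mem_range] at hi
    rw [hg _ (by simp only [List.length_drop, List.length_append, List.length_singleton]; omega),
      mul_zero]
  have hlen : (l ++ [x]).length = l.length + 1 := List.length_append
  rw [mul_apply, hlen, Finset.sum_range_succ, Finset.sum_range_succ, hlong, zero_add,
    List.take_left, List.drop_left, ← hlen, List.take_length, List.drop_length]

theorem mul_apply_apply (φ ψ : WordSeries α (WordSeries β A)) (X : List α) (Y : List β) :
    (φ * ψ) X Y = ∑ i ∈ Finset.range (X.length + 1), ∑ j ∈ Finset.range (Y.length + 1),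
      φ (X.take i) (Y.take j) * ψ (X.drop i) (Y.drop j) := by
  simp only [mul_apply, sum_apply]

theorem one_apply_apply_of_left_ne_nil {X : List α} (hX : X ≠ []) (Y : List β) :
    (1 : WordSeries α (WordSeries β A)) X Y = 0 := by
  rw [one_apply_of_ne_nil hX, zero_apply]

theorem one_apply_apply_of_right_ne_nil (X : List α) {Y : List β} (hY : Y ≠ []) :
    (1 : WordSeries α (WordSeries β A)) X Y = 0 := by
  cases X with
  | nil => rw [one_apply_nil, one_apply_of_ne_nil hY]
  | cons => rfl

theorem pow_apply_apply_eq_zero {φ : WordSeries α (WordSeries β A)} (hφ : φ [] [] = 0) {k : ℕ}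
    {X : List α} {Y : List β} (hk : X.length + Y.length < k) : (φ ^ k) X Y = 0 := by
  induction k generalizing X Y with
  | zero => exact absurd hk (Nat.not_lt_zero _)
  | succ k ih =>
    rw [pow_succ', mul_apply_apply]
    refine Finset.sum_eq_zero fun i _ => Finset.sum_eq_zero fun j _ => ?_
    by_cases hfirst : X.take i = [] ∧ Y.take j = []
    · rw [hfirst.1, hfirst.2, hφ, zero_mul]
    · rw [ih, mul_zero]
      have hpos : (X.take i).length + (Y.take j).length ≠ 0 := by
        simpa only [Ne, Nat.add_eq_zero_iff, List.length_eq_zero_iff] using hfirst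
      simp only [List.length_take, List.length_drop] at hpos ⊢
      omega

/-- The geometric series `∑ φ ^ k` of a series with `φ [] [] = 0`. The coefficient at `(X, Y)` is
truncated after `k = |X| + |Y|`, beyond which the powers of `φ` do not contribute. -/
def geomSeries (φ : WordSeries α (WordSeries β A)) : WordSeries α (WordSeries β A) :=
  fun X Y => ∑ k ∈ Finset.range (X.length + Y.length + 1), (φ ^ k) X Y

theorem geomSeries_apply_eq_of_le {φ : WordSeries α (WordSeries β A)} (hφ : φ [] [] = 0)
    {X : List α} {Y : List β} {n : ℕ} (hn : X.length + Y.length ≤ n) :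
    geomSeries φ X Y = (∑ k ∈ Finset.range (n + 1), φ ^ k) X Y := by
  rw [sum_apply, sum_apply]
  refine Finset.sum_subset (Finset.range_mono (Nat.succ_le_succ hn)) fun k _ hk => ?_
  rw [Finset.mem_range, not_lt] at hk
  exact pow_apply_apply_eq_zero hφ hk

theorem geomSeries_eq_one_add_mul {φ : WordSeries α (WordSeries β A)} (hφ : φ [] [] = 0) :
    geomSeries φ = 1 + geomSeries φ * φ := by
  ext X Y
  let n := X.length + Y.length
  have hmul : (geomSeries φ * φ) X Y = ((∑ k ∈ Finset.range (n + 1), φ ^ k) * φ) X Y := by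
    simp only [mul_apply_apply]
    refine Finset.sum_congr rfl fun i _ => Finset.sum_congr rfl fun j _ => ?_
    rw [geomSeries_apply_eq_of_le hφ (Nat.add_le_add (List.length_take_le' i X)
      (List.length_take_le' j Y))]
  calc geomSeries φ X Y
      = (∑ k ∈ Finset.range (n + 1 + 1), φ ^ k) X Y :=
        geomSeries_apply_eq_of_le hφ (Nat.le_succ n)
    _ = (1 + (∑ k ∈ Finset.range (n + 1), φ ^ k) * φ) X Y := by
        simp only [Finset.sum_range_succ' _ (n + 1), pow_zero, pow_succ, Finset.sum_mul,
          add_comm (1 : WordSeries α (WordSeries β A))]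
    _ = (1 + geomSeries φ * φ) X Y := by
        simp only [add_apply, hmul]

theorem geomSeries_apply_append_singleton {φ : WordSeries α (WordSeries β A)}
    (hφ : φ [] [] = 0) (hlong : ∀ X : List α, 2 ≤ X.length → φ X = 0) (xs : List α) (x : α) :
    geomSeries φ (xs ++ [x]) = geomSeries φ xs * φ [x] + geomSeries φ (xs ++ [x]) * φ [] :=
  calc geomSeries φ (xs ++ [x])
      = (1 + geomSeries φ * φ) (xs ++ [x]) := congrFun (geomSeries_eq_one_add_mul hφ) _
    _ = (geomSeries φ * φ) (xs ++ [x]) := by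
        rw [add_apply, one_apply_of_ne_nil (List.concat_ne_nil x xs), zero_add]
    _ = geomSeries φ xs * φ [x] + geomSeries φ (xs ++ [x]) * φ [] :=
        mul_apply_append_singleton _ hlong xs x

end Semiring

end WordSeries

section Factorizations

variable {α β A : Type*}

theorem sum_map_splits [AddCommMonoid A] (l : List α) (F : List α × List α → A) :
    ((splits l).map F).sum = ∑ i ∈ Finset.range (l.length + 1), F (l.take i, l.drop i) := by
  rw [splits, List.map_map]
  rfl

theorem sum_map_splitsN_succ_s3 [AddCommMonoid A] (k : ℕ) (l : List α) (F : List (List α) → A) :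
    ((splitsN (k + 1) l).map F).sum = ∑ i ∈ Finset.range (l.length + 1),
      ((splitsN k (l.drop i)).map fun r => F (l.take i :: r)).sum := by
  rw [← sum_map_splits l fun p => ((splitsN k p.2).map fun r => F (p.1 :: r)).sum]
  simp only [splitsN, List.flatMap_def, List.map_flatten, List.sum_flatten, List.map_map,
    Function.comp_def]

theorem sum_map_finsetSum [AddCommMonoid A] (L : List α) (s : Finset β) (f : β → α → A) :
    (L.map fun a => ∑ b ∈ s, f b a).sum = ∑ b ∈ s, (L.map (f b)).sum := by
  simpa only [Multiset.map_coe, Multiset.sum_coe] using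
    Multiset.sum_map_sum (m := (L : Multiset α)) (s := s) (f := fun a b => f b a)

theorem sum_prod_zipWith_splitsN [Semiring A] (φ : WordSeries α (WordSeries β A)) (k : ℕ)
    (X : List α) (Y : List β) :
    ((splitsN k X).map fun Xs =>
      ((splitsN k Y).map fun Ys => (List.zipWith φ Xs Ys).prod).sum).sum = (φ ^ k) X Y := by
  induction k generalizing X Y with
  | zero =>
    rw [pow_zero]
    cases X with
    | nil =>
      cases Y with
      | nil => exact List.sum_singleton.trans List.sum_singleton
      | cons y Y =>
        rw [WordSeries.one_apply_apply_of_right_ne_nil [] (List.cons_ne_nil y Y)]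
        exact List.sum_singleton
    | cons x X => rw [WordSeries.one_apply_apply_of_left_ne_nil (List.cons_ne_nil x X)]; rfl
  | succ k ih =>
    have prod_cons (a : List α) (Xs : List (List α)) (b : List β) (Ys : List (List β)) :
        (List.zipWith φ (a :: Xs) (b :: Ys)).prod = φ a b * (List.zipWith φ Xs Ys).prod :=
      List.prod_cons
    simp only [sum_map_splitsN_succ_s3, prod_cons, sum_map_finsetSum, List.sum_map_mul_left, ih,
      pow_succ', WordSeries.mul_apply_apply]
    exact Finset.sum_comm

end Factorizations

section LodayRonco

variable (K : Type*) [Field K] {R : Type*} [AddCommGroup R] [Module K R] (M : R → List R → R)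

/-- The extended brace operation `(X, Y) ↦ M(X; Y)` as a series with coefficients in `T(R)`. -/
def braceSeries : WordSeries R (WordSeries R (TensorAlgebra K R)) :=
  fun X Y => TensorAlgebra.ι K (Mext M X Y)

theorem braceSeries_nil_nil : braceSeries K M [] [] = 0 :=
  map_zero _

theorem wd_zipWith_Mext (Xs Ys : List (List R)) :
    wd K (List.zipWith (Mext M) Xs Ys) = (List.zipWith (braceSeries K M) Xs Ys).prod := by
  rw [wd, List.map_zipWith]
  rfl

theorem starW_eq_geomSeries (X Y : List R) :
    starW K M X Y = WordSeries.geomSeries (braceSeries K M) X Y := by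
  by_cases hempty : X = [] ∧ Y = []
  · obtain ⟨rfl, rfl⟩ := hempty
    simp [WordSeries.geomSeries, starW, starWords, wd, WordSeries.one_apply_nil]
  · have hzero : (braceSeries K M ^ 0) X Y = 0 := by
      rw [pow_zero]
      by_cases hX : X = []
      · exact WordSeries.one_apply_apply_of_right_ne_nil X fun hY => hempty ⟨hX, hY⟩
      · exact WordSeries.one_apply_apply_of_left_ne_nil hX Y
    rw [WordSeries.geomSeries, Finset.sum_range_succ', hzero, add_zero, starW, starWords]
    · simp only [List.flatMap_def, List.map_flatten, List.sum_flatten, List.map_map,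
        Function.comp_def, wd_zipWith_Mext, sum_prod_zipWith_splitsN]
      rfl
    · exact fun hX hY => hempty ⟨hX, hY⟩

theorem braceSeries_eq_zero_of_two_le_length {X : List R} (hX : 2 ≤ X.length) :
    braceSeries K M X = 0 := by
  match X, hX with
  | _ :: _ :: _, _ => exact funext fun _ => map_zero _

theorem braceSeries_nil_eq_zero_of_two_le_length {Y : List R} (hY : 2 ≤ Y.length) :
    braceSeries K M [] Y = 0 := by
  match Y, hY with
  | _ :: _ :: _, _ => exact map_zero _

theorem braceSeries_singleton (x : R) (Y : List R) :
    braceSeries K M [x] Y = TensorAlgebra.ι K (M x Y) := by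
  cases Y <;> rfl

variable {M} in
theorem mul_braceSeries_singleton_apply_append (hM0 : ∀ x : R, M x [] = x)
    (f : WordSeries R (TensorAlgebra K R)) (x y : R) (ys : List R) :
    (f * braceSeries K M [x]) (ys ++ [y]) = f (ys ++ [y]) * TensorAlgebra.ι K x +
      ∑ i ∈ Finset.range (ys.length + 1),
        f ((ys ++ [y]).take i) * TensorAlgebra.ι K (M x ((ys ++ [y]).drop i)) := by
  simp only [WordSeries.mul_apply, braceSeries_singleton]
  rw [Finset.sum_range_succ, List.take_length, List.drop_length, hM0, List.length_append,
    List.length_singleton, add_comm]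

theorem mul_braceSeries_nil_apply_append (f : WordSeries R (TensorAlgebra K R)) (ys : List R)
    (y : R) : (f * braceSeries K M []) (ys ++ [y]) = f ys * TensorAlgebra.ι K y := by
  rw [WordSeries.mul_apply_append_singleton f fun _ => braceSeries_nil_eq_zero_of_two_le_length K M,
    braceSeries_nil_nil, mul_zero, add_zero]
  rfl

end LodayRonco

theorem star_recursive_formula_general (K : Type*) [Field K] {R : Type*} [AddCommGroup R]
    [Module K R] (M : R → List R → R) (hM0 : ∀ x : R, M x [] = x) (xs ys : List R) (x y : R) :
    starW K M (xs ++ [x]) (ys ++ [y]) =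
      starW K M xs (ys ++ [y]) * TensorAlgebra.ι K x +
      starW K M (xs ++ [x]) ys * TensorAlgebra.ι K y +
      ∑ i ∈ Finset.range (ys.length + 1),
        starW K M xs ((ys ++ [y]).take i) *
          TensorAlgebra.ι K (M x ((ys ++ [y]).drop i)) := by
  simp only [starW_eq_geomSeries]
  set φ := braceSeries K M
  set S := WordSeries.geomSeries φ
  have hlast : S (xs ++ [x]) = S xs * φ [x] + S (xs ++ [x]) * φ [] :=
    WordSeries.geomSeries_apply_append_singleton (braceSeries_nil_nil K M)
      (fun _ => braceSeries_eq_zero_of_two_le_length K M) xs x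
  calc S (xs ++ [x]) (ys ++ [y])
      = (S xs * φ [x]) (ys ++ [y]) + (S (xs ++ [x]) * φ []) (ys ++ [y]) := congrFun hlast _
    _ = _ := by
        rw [mul_braceSeries_singleton_apply_append K hM0, mul_braceSeries_nil_apply_append,
          add_right_comm]

/-- Let `R` be a brace algebra and `⋆` the Loday–Ronco product on
`T(R)`. For all `n, m ≥ 1` and letters `xᵢ, yⱼ ∈ R` (here `X = x₁⋯x_{n-1}`,
`Y = y₁⋯y_{m-1}`, `x = xₙ`, `y = y_m`):
`(x₁⋯xₙ) ⋆ (y₁⋯y_m) = [(x₁⋯x_{n−1}) ⋆ (y₁⋯y_m)]·xₙ + [(x₁⋯xₙ) ⋆ (y₁⋯y_{m−1})]·y_m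
  + Σ_{i=0}^{m−1} [(x₁⋯x_{n−1}) ⋆ (y₁⋯yᵢ)]·M_{1,m−i}(xₙ; y_{i+1}⋯y_m)`,
empty words being treated as `1` (with `1 ⋆ Z = Z ⋆ 1 = Z`). -/
theorem star_recursive_formula
    (K : Type*) [Field K] {R : Type*} [AddCommGroup R] [Module K R]
    (M : R → List R → R)
    (hM0 : ∀ x : R, M x [] = x)
    (hadd₁ : ∀ (a b : R) (ys : List R), M (a + b) ys = M a ys + M b ys)
    (hsmul₁ : ∀ (c : K) (a : R) (ys : List R), M (c • a) ys = c • M a ys)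
    (hadd₂ : ∀ (x : R) (p s : List R) (a b : R),
      M x (p ++ (a + b) :: s) = M x (p ++ a :: s) + M x (p ++ b :: s))
    (hsmul₂ : ∀ (x : R) (p s : List R) (c : K) (a : R),
      M x (p ++ (c • a) :: s) = c • M x (p ++ a :: s))
    (hbrace : BraceRel M) :
    ∀ (xs ys : List R) (x y : R),
      starW K M (xs ++ [x]) (ys ++ [y]) =
        starW K M xs (ys ++ [y]) * TensorAlgebra.ι K x +
        starW K M (xs ++ [x]) ys * TensorAlgebra.ι K y +
        ∑ i ∈ Finset.range (ys.length + 1),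
          starW K M xs ((ys ++ [y]).take i) *
            TensorAlgebra.ι K (M x ((ys ++ [y]).drop i)) :=
  star_recursive_formula_general K M hM0
end
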